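/- Every proper solution of the system x_1''(t) = t^2·e^{2t}·|x_2(t)|^2·sign x_2(t), x_2''(t) = −e^{−t}·|x_1(t)|^3·sign x_1(t) on [0,∞) is oscillating. -/

import Mathlib

open MeasureTheory Set Filter

/-!
If one component has no zeros for large `t`, then the second derivative of the other one has a
constant strict sign, so the other component is strictly convex or concave and hence eventually of
constant sign too (`eventually_sign_of_convex`). Up to the symmetry `(x₁, x₂) ↦ (-x₁, -x₂)` this
leaves two cases, both impossible because a positive function cannot satisfy `f'' ≤ -k < 0` on a
half-line (`not_strongly_concave`).

* `x₁ > 0`, `x₂ > 0` (`ExpSystem.not_pos_pos`): `x₂` is concave and positive, hence nondecreasing and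
  bounded below by some `c > 0`. Then `x₁'' ≥ c² e^{2t}` makes `x₁ ≥ e^t` eventually, so
  `x₂'' ≤ -e^{2t} ≤ -1`.
* `x₁ > 0`, `x₂ < 0` (`ExpSystem.not_pos_neg`): `x₁` is concave and positive, hence `x₁ ≥ c > 0`. With
  `y = -x₂ > 0` one has `y'' = e^{-t} x₁³ ≥ c³ e^{-t}`. If `y' > 0` somewhere, then `y` is eventually
  bounded below by a positive constant and `x₁'' = -t² e^{2t} y²` is too negative. Otherwise `y` is
  bounded, and integrating `y'' ≥ c³ e^{-t}` twice from infinity gives `y ≥ c³ e^{-t}`, so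
  `x₁'' ≤ -c⁶ t²`, again impossible.
-/

lemma le_of_deriv_nonneg {f f' : ℝ → ℝ} {T : ℝ}
    (hf : ∀ t, T ≤ t → HasDerivAt f (f' t) t) (h : ∀ t, T ≤ t → 0 ≤ f' t)
    {a b : ℝ} (ha : T ≤ a) (hab : a ≤ b) : f a ≤ f b := by
  have hm : MonotoneOn f (Ici T) := by
    apply monotoneOn_of_deriv_nonneg (convex_Ici T)
    · exact fun t ht => (hf t ht).continuousAt.continuousWithinAt
    · intro t ht
      rw [interior_Ici] at ht
      exact (hf t (le_of_lt ht)).differentiableAt.differentiableWithinAt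
    · intro t ht
      rw [interior_Ici] at ht
      rw [(hf t (le_of_lt ht)).deriv]
      exact h t (le_of_lt ht)
  exact hm ha (ha.trans hab) hab

lemma lt_of_deriv_pos {f f' : ℝ → ℝ} {T : ℝ}
    (hf : ∀ t, T ≤ t → HasDerivAt f (f' t) t) (h : ∀ t, T ≤ t → 0 < f' t)
    {a b : ℝ} (ha : T ≤ a) (hab : a < b) : f a < f b := by
  have hm : StrictMonoOn f (Ici T) := by
    apply strictMonoOn_of_deriv_pos (convex_Ici T)
    · exact fun t ht => (hf t ht).continuousAt.continuousWithinAt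
    · intro t ht
      rw [interior_Ici] at ht
      rw [(hf t (le_of_lt ht)).deriv]
      exact h t (le_of_lt ht)
  exact hm ha (ha.trans hab.le) hab

/-- A convex function lies above its tangent lines. -/
lemma tangent_le {f f' f'' : ℝ → ℝ} {T : ℝ}
    (hf : ∀ t, T ≤ t → HasDerivAt f (f' t) t) (hf' : ∀ t, T ≤ t → HasDerivAt f' (f'' t) t)
    (h : ∀ t, T ≤ t → 0 ≤ f'' t) {a b : ℝ} (ha : T ≤ a) (hab : a ≤ b) :
    f a + f' a * (b - a) ≤ f b := by
  have key := le_of_deriv_nonneg (f := fun t => f t - f' a * t) (f' := fun t => f' t - f' a)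
    (T := a)
    (fun t ht => ((hf t (ha.trans ht)).sub ((hasDerivAt_id t).const_mul (f' a))).congr_deriv
      (by rw [mul_one]))
    (fun t ht => sub_nonneg.2 (le_of_deriv_nonneg hf' h ha ht)) le_rfl hab
  linarith

/-- A convex function that is bounded above on a half-line is nonincreasing there. -/
lemma deriv_nonpos_of_convex_bdd {f f' f'' : ℝ → ℝ} {T B : ℝ}
    (hf : ∀ t, T ≤ t → HasDerivAt f (f' t) t) (hf' : ∀ t, T ≤ t → HasDerivAt f' (f'' t) t)
    (h : ∀ t, T ≤ t → 0 ≤ f'' t) (hB : ∀ t, T ≤ t → f t ≤ B) {s : ℝ} (hs : T ≤ s) :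
    f' s ≤ 0 := by
  by_contra! hpos
  have h1 : 0 ≤ (B - f s + 1) / f' s := div_nonneg (by linarith [hB s hs]) hpos.le
  have h2 := tangent_le hf hf' h hs (b := s + (B - f s + 1) / f' s) (by linarith)
  have h3 := hB (s + (B - f s + 1) / f' s) (by linarith)
  rw [add_sub_cancel_left, mul_div_cancel₀ _ hpos.ne'] at h2
  linarith

/-- A positive function cannot have second derivative at most `-k < 0` on a half-line. -/
lemma not_strongly_concave {f f' f'' : ℝ → ℝ} {T k : ℝ} (hk : 0 < k)
    (hf : ∀ t, T ≤ t → HasDerivAt f (f' t) t) (hf' : ∀ t, T ≤ t → HasDerivAt f' (f'' t) t)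
    (h : ∀ t, T ≤ t → f'' t ≤ -k) (hpos : ∀ t, T ≤ t → 0 < f t) : False := by
  have hmono : ∀ s, T ≤ s → -f' s ≤ 0 := fun s hs =>
    deriv_nonpos_of_convex_bdd (f := fun t => -f t) (f' := fun t => -f' t)
      (f'' := fun t => -f'' t) (T := T) (B := 0)
      (fun t ht => (hf t ht).neg) (fun t ht => (hf' t ht).neg)
      (fun t ht => by linarith [h t ht]) (fun t ht => by linarith [hpos t ht]) hs
  have hd : 0 ≤ (f' T + 1) / k := div_nonneg (by linarith [hmono T le_rfl]) hk.le
  have key := le_of_deriv_nonneg (f := fun t => -f' t - k * t) (f' := fun t => -f'' t - k)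
    (T := T)
    (fun t ht => ((hf' t ht).neg.sub ((hasDerivAt_id t).const_mul k)).congr_deriv (by rw [mul_one]))
    (fun t ht => by linarith [h t ht]) le_rfl
    (b := T + (f' T + 1) / k) (by linarith)
  rw [mul_add, mul_div_cancel₀ _ hk.ne'] at key
  linarith [hmono (T + (f' T + 1) / k) (by linarith)]

/-- A strictly convex function on a half-line is eventually of constant strict sign. -/
lemma eventually_sign_of_convex {f f' f'' : ℝ → ℝ} {T : ℝ}
    (hf : ∀ t, T ≤ t → HasDerivAt f (f' t) t) (hf' : ∀ t, T ≤ t → HasDerivAt f' (f'' t) t)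
    (h : ∀ t, T ≤ t → 0 < f'' t) :
    ∃ S, T ≤ S ∧ ((∀ t, S ≤ t → 0 < f t) ∨ (∀ t, S ≤ t → f t < 0)) := by
  by_cases hp : ∃ s, T ≤ s ∧ 0 < f' s
  · obtain ⟨s, hs, hps⟩ := hp
    have h1 : 0 ≤ (|f s| + 1) / f' s := by positivity
    refine ⟨s + (|f s| + 1) / f' s, by linarith, Or.inl fun t ht => ?_⟩
    have h2 := tangent_le hf hf' (fun t ht => (h t ht).le) hs (b := t) (by linarith)
    have h3 : |f s| + 1 ≤ f' s * (t - s) := by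
      rw [← div_le_iff₀' hps]
      linarith
    linarith [neg_abs_le (f s)]
  · push Not at hp
    by_cases hz : ∃ s, T ≤ s ∧ f s ≤ 0
    · obtain ⟨s, hs, hz⟩ := hz
      refine ⟨s + 1, by linarith, Or.inr fun t ht => ?_⟩
      have := lt_of_deriv_pos (f := fun t => -f t) (f' := fun t => -f' t) (T := T)
        (fun t ht => (hf t ht).neg)
        (fun t ht => by
          have h4 := lt_of_deriv_pos hf' h ht (lt_add_one t)
          linarith [hp (t + 1) (by linarith)]) hs (b := t) (by linarith)
      linarith
    · push Not at hz
      exact ⟨T, le_rfl, Or.inl hz⟩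

/-- A continuous function without zeros on a half-line has constant sign there. -/
lemma sign_of_ne_zero {f : ℝ → ℝ} {T : ℝ} (hf : ∀ t, T ≤ t → ContinuousAt f t)
    (h : ∀ t, T ≤ t → f t ≠ 0) : (∀ t, T ≤ t → 0 < f t) ∨ (∀ t, T ≤ t → f t < 0) := by
  by_contra! hc
  obtain ⟨⟨a, ha, hfa⟩, b, hb, hfb⟩ := hc
  have hpre : IsPreconnected (Ici T) := isPreconnected_Ici
  obtain ⟨c, hc, h0⟩ := hpre.intermediate_value ha hb
    (fun t ht => (hf t ht).continuousWithinAt) ⟨hfa, hfb⟩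
  exact h c hc h0

/-- `(u, v)` solves the system on `[T, ∞)`, where `T ≥ 1` and the nonlinearities `|v|² sign v` and
`|u|³ sign u` are written as `v |v|` and `u³`; `p` and `q` are the first derivatives. -/
structure ExpSystem (u p v q : ℝ → ℝ) (T : ℝ) : Prop where
  one_le : 1 ≤ T
  du : ∀ t, T ≤ t → HasDerivAt u (p t) t
  dp : ∀ t, T ≤ t → HasDerivAt p (t ^ 2 * Real.exp (2 * t) * (v t * |v t|)) t
  dv : ∀ t, T ≤ t → HasDerivAt v (q t) t
  dq : ∀ t, T ≤ t → HasDerivAt q (-(Real.exp (-t) * u t ^ 3)) t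

namespace ExpSystem

variable {u p v q : ℝ → ℝ} {T : ℝ}

lemma mono (h : ExpSystem u p v q T) {S : ℝ} (hS : T ≤ S) : ExpSystem u p v q S :=
  ⟨h.one_le.trans hS, fun t ht => h.du t (hS.trans ht), fun t ht => h.dp t (hS.trans ht),
    fun t ht => h.dv t (hS.trans ht), fun t ht => h.dq t (hS.trans ht)⟩

lemma neg (h : ExpSystem u p v q T) :
    ExpSystem (fun t => -u t) (fun t => -p t) (fun t => -v t) (fun t => -q t) T := by
  refine ⟨h.one_le, fun t ht => (h.du t ht).neg, fun t ht => ?_, fun t ht => (h.dv t ht).neg,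
    fun t ht => ?_⟩
  · exact (h.dp t ht).neg.congr_deriv (by rw [abs_neg]; ring)
  · exact (h.dq t ht).neg.congr_deriv (by ring)

lemma not_pos_pos (h : ExpSystem u p v q T) (hu : ∀ t, T ≤ t → 0 < u t)
    (hv : ∀ t, T ≤ t → 0 < v t) : False := by
  have hq : ∀ t, T ≤ t → -q t ≤ 0 := fun t ht =>
    deriv_nonpos_of_convex_bdd (B := 0) (fun t ht => (h.dv t ht).neg) (fun t ht => (h.dq t ht).neg)
      (fun t ht => by have := hu t ht; rw [neg_neg]; positivity)
      (fun t ht => by simpa using (hv t ht).le) ht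
  have hc := hv T le_rfl
  have hvc : ∀ t, T ≤ t → v T ≤ v t := fun t ht =>
    le_of_deriv_nonneg h.dv (fun t ht => by linarith [hq t ht]) le_rfl ht
  have hT := h.one_le
  obtain ⟨C, hC, hCv⟩ : ∃ C, 0 < C ∧ 4 * C = v T ^ 2 := ⟨v T ^ 2 / 4, by positivity, by ring⟩
  have hexp : ∀ t, HasDerivAt (fun t => Real.exp (2 * t)) (2 * Real.exp (2 * t)) t := fun t => by
    simpa [mul_comm] using ((hasDerivAt_id t).const_mul 2).exp
  -- `u - C e^{2t}` is convex, hence above a line; this gives the exponential growth of `u`.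
  have htan : ∀ t, T ≤ t → (u T - C * Real.exp (2 * T)) +
      (p T - C * (2 * Real.exp (2 * T))) * (t - T) ≤ u t - C * Real.exp (2 * t) := fun t ht =>
    tangent_le (f := fun t => u t - C * Real.exp (2 * t))
      (f' := fun t => p t - C * (2 * Real.exp (2 * t)))
      (f'' := fun t => t ^ 2 * Real.exp (2 * t) * (v t * |v t|) -
        C * (2 * (2 * Real.exp (2 * t))))
      (fun t ht => (h.du t ht).sub ((hexp t).const_mul C))
      (fun t ht => (h.dp t ht).sub (((hexp t).const_mul 2).const_mul C))
      (fun t ht => by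
        have h1 := hvc t ht
        rw [abs_of_pos (hv t ht)]
        have h2 : v T ^ 2 ≤ 1 * (v t * v t) := by nlinarith
        have h3 : 1 * (v t * v t) ≤ t ^ 2 * (v t * v t) := by
          apply mul_le_mul_of_nonneg_right _ (mul_self_nonneg _)
          nlinarith
        have h4 := Real.exp_pos (2 * t)
        nlinarith) le_rfl ht
  set A := u T - C * Real.exp (2 * T)
  set D := p T - C * (2 * Real.exp (2 * T))
  -- Beyond `S` the exponential `e^t` exceeds `(|A| + |D| + 1) / C`.
  obtain ⟨S, hS, hSX⟩ : ∃ S, T ≤ S ∧ ∀ t, S ≤ t → (|A| + |D| + 1) ≤ C * Real.exp t := by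
    refine ⟨max T ((|A| + |D| + 1) / C), le_max_left _ _, fun t ht => ?_⟩
    rw [← div_le_iff₀' hC]
    linarith [Real.add_one_le_exp t, le_max_right T ((|A| + |D| + 1) / C)]
  refine not_strongly_concave one_pos (fun t ht => h.dv t (hS.trans ht))
    (fun t ht => h.dq t (hS.trans ht)) (fun t ht => ?_) (fun t ht => hv t (hS.trans ht))
  have htT := hS.trans ht
  have hX := hSX t ht
  have hXt := Real.add_one_le_exp t
  have hg : Real.exp t ≤ u t := by
    have h1 := htan t htT
    have h2 : Real.exp (2 * t) = Real.exp t * Real.exp t := by rw [← Real.exp_add]; ring_nf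
    rw [h2] at h1
    have h3 : -(|D| * (t - T)) ≤ D * (t - T) := by
      rw [← neg_mul]
      exact mul_le_mul_of_nonneg_right (neg_abs_le D) (by linarith)
    have h4 : |D| * (t - T) ≤ |D| * Real.exp t :=
      mul_le_mul_of_nonneg_left (by linarith) (abs_nonneg D)
    have h5 := neg_abs_le A
    have h6 : |A| * 1 ≤ |A| * Real.exp t :=
      mul_le_mul_of_nonneg_left (by linarith) (abs_nonneg A)
    have h7 := mul_le_mul_of_nonneg_right hX (Real.exp_pos t).le
    nlinarith
  have h8 : Real.exp t ^ 3 ≤ u t ^ 3 := pow_le_pow_left₀ (Real.exp_pos t).le hg 3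
  have h9 : Real.exp (-t) * Real.exp t = 1 := by rw [← Real.exp_add]; simp
  have h10 : Real.exp (-t) * Real.exp t ^ 3 ≤ Real.exp (-t) * u t ^ 3 :=
    mul_le_mul_of_nonneg_left h8 (Real.exp_pos _).le
  have h11 : Real.exp (-t) * Real.exp t ^ 3 = Real.exp t ^ 2 := by
    calc _ = (Real.exp (-t) * Real.exp t) * Real.exp t ^ 2 := by ring
      _ = _ := by rw [h9, one_mul]
  nlinarith

/-- `u > 0` cannot coexist with a lower bound `k e^{-t}` on `-v`, since then `u'' ≤ -k²`. -/
lemma not_pos_of_le_neg (h : ExpSystem u p v q T) (hu : ∀ t, T ≤ t → 0 < u t) {k : ℝ} (hk : 0 < k)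
    (hv : ∀ t, T ≤ t → k * Real.exp (-t) ≤ -v t) : False := by
  refine not_strongly_concave (pow_pos hk 2) h.du h.dp (fun t ht => ?_) hu
  have h1 := hv t ht
  have hE := Real.exp_pos (-t)
  have h2 : (k * Real.exp (-t)) ^ 2 ≤ (-v t) ^ 2 := pow_le_pow_left₀ (by positivity) h1 2
  have hneg : v t ≤ 0 := by nlinarith
  rw [abs_of_nonpos hneg]
  have h3 : Real.exp (2 * t) * Real.exp (-t) ^ 2 = 1 := by
    rw [sq, ← Real.exp_add, ← Real.exp_add]
    ring_nf
    exact Real.exp_zero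
  have h4 : Real.exp (2 * t) * (k * Real.exp (-t)) ^ 2 ≤ Real.exp (2 * t) * (-v t) ^ 2 :=
    mul_le_mul_of_nonneg_left h2 (Real.exp_pos _).le
  have h5 : Real.exp (2 * t) * (k * Real.exp (-t)) ^ 2 = k ^ 2 := by
    calc _ = (Real.exp (2 * t) * Real.exp (-t) ^ 2) * k ^ 2 := by ring
      _ = _ := by rw [h3, one_mul]
  have hT := h.one_le
  have h6 : 1 ≤ t ^ 2 := by nlinarith
  have h7 : 1 * (Real.exp (2 * t) * (-v t) ^ 2) ≤ t ^ 2 * (Real.exp (2 * t) * (-v t) ^ 2) :=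
    mul_le_mul_of_nonneg_right h6 (by positivity)
  linarith

lemma not_pos_neg (h : ExpSystem u p v q T) (hu : ∀ t, T ≤ t → 0 < u t)
    (hv : ∀ t, T ≤ t → v t < 0) : False := by
  have hp : ∀ t, T ≤ t → -p t ≤ 0 := fun t ht =>
    deriv_nonpos_of_convex_bdd (B := 0) (fun t ht => (h.du t ht).neg) (fun t ht => (h.dp t ht).neg)
      (fun t ht => by
        rw [← mul_neg, ← neg_mul]
        have := hv t ht
        have : 0 < -v t := by linarith
        positivity)
      (fun t ht => by simpa using (hu t ht).le) ht
  have hc := hu T le_rfl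
  have huc : ∀ t, T ≤ t → u T ≤ u t := fun t ht =>
    le_of_deriv_nonneg h.du (fun t ht => by linarith [hp t ht]) le_rfl ht
  have hT := h.one_le
  have hdy : ∀ t, T ≤ t → HasDerivAt (fun t => -v t) (-q t) t := fun t ht => (h.dv t ht).neg
  have hdz : ∀ t, T ≤ t → HasDerivAt (fun t => -q t) (Real.exp (-t) * u t ^ 3) t := fun t ht =>
    (h.dq t ht).neg.congr_deriv (neg_neg _)
  have hconv : ∀ t, T ≤ t → 0 ≤ Real.exp (-t) * u t ^ 3 := fun t ht => by
    have := hu t ht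
    positivity
  by_cases hs : ∃ s, T ≤ s ∧ 0 < -q s
  · obtain ⟨s, hs, hqs⟩ := hs
    refine (h.mono hs).not_pos_of_le_neg (fun t ht => hu t (hs.trans ht)) (k := -v s)
      (by linarith [hv s hs]) (fun t ht => ?_)
    have h1 := tangent_le hdy hdz hconv hs ht
    have h2 : 0 ≤ -q s * (t - s) := mul_nonneg hqs.le (by linarith)
    have h3 : Real.exp (-t) ≤ 1 := Real.exp_le_one_iff.2 (by linarith)
    have h4 : -v s * Real.exp (-t) ≤ -v s * 1 :=
      mul_le_mul_of_nonneg_left h3 (by linarith [hv s hs])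
    linarith
  · push Not at hs
    have hbdd : ∀ t, T ≤ t → -v t ≤ -v T := fun t ht => by
      have := le_of_deriv_nonneg h.dv (fun t ht => by linarith [hs t ht]) le_rfl ht
      linarith
    have hE : ∀ t, HasDerivAt (fun t => Real.exp (-t)) (-Real.exp (-t)) t := fun t => by
      simpa using (hasDerivAt_id t).neg.exp
    -- `-v - c³ e^{-t}` is convex and bounded, hence nonincreasing.
    have hdw : ∀ t, T ≤ t → HasDerivAt (fun t => -v t - u T ^ 3 * Real.exp (-t))
        (-q t - u T ^ 3 * -Real.exp (-t)) t := fun t ht =>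
      (hdy t ht).sub ((hE t).const_mul _)
    have hw' : ∀ t, T ≤ t → -q t - u T ^ 3 * -Real.exp (-t) ≤ 0 := fun t ht =>
      deriv_nonpos_of_convex_bdd (B := -v T) hdw
        (f'' := fun t => Real.exp (-t) * u t ^ 3 - u T ^ 3 * - -Real.exp (-t))
        (fun t ht => (hdz t ht).sub ((hE t).neg.const_mul _))
        (fun t ht => by
          have h1 : u T ^ 3 ≤ u t ^ 3 := pow_le_pow_left₀ hc.le (huc t ht) 3
          have h2 := mul_le_mul_of_nonneg_left h1 (Real.exp_pos (-t)).le
          rw [neg_neg]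
          linarith)
        (fun t ht => by
          have : 0 < u T ^ 3 * Real.exp (-t) := by positivity
          linarith [hbdd t ht]) ht
    refine h.not_pos_of_le_neg hu (k := u T ^ 3) (by positivity) (fun t ht => ?_)
    -- Its limit at infinity is nonnegative, so it is nonnegative throughout.
    have hlim : Tendsto (fun s => -(u T ^ 3 * Real.exp (-s))) atTop (nhds 0) := by
      have := (Real.tendsto_exp_neg_atTop_nhds_zero.const_mul (u T ^ 3)).neg
      simpa using this
    have hle : 0 ≤ -v t - u T ^ 3 * Real.exp (-t) := by
      refine le_of_tendsto hlim ?_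
      filter_upwards [eventually_ge_atTop t] with s hs
      have h1 := le_of_deriv_nonneg (fun t ht => (hdw t ht).neg)
        (fun t ht => by linarith [hw' t ht]) ht hs
      simp only [Pi.neg_apply] at h1
      linarith [hv s (ht.trans hs)]
    linarith

lemma not_signs (h : ExpSystem u p v q T) (hu : (∀ t, T ≤ t → 0 < u t) ∨ (∀ t, T ≤ t → u t < 0))
    (hv : (∀ t, T ≤ t → 0 < v t) ∨ (∀ t, T ≤ t → v t < 0)) : False := by
  rcases hu with hu | hu <;> rcases hv with hv | hv
  · exact h.not_pos_pos hu hv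
  · exact h.not_pos_neg hu hv
  · exact h.neg.not_pos_neg (fun t ht => by linarith [hu t ht]) (fun t ht => by linarith [hv t ht])
  · exact h.neg.not_pos_pos (fun t ht => by linarith [hu t ht]) (fun t ht => by linarith [hv t ht])

lemma not_pos_left (h : ExpSystem u p v q T) (hu : ∀ t, T ≤ t → 0 < u t) : False := by
  obtain ⟨S, hS, hsign⟩ := eventually_sign_of_convex (fun t ht => (h.dv t ht).neg)
    (fun t ht => (h.dq t ht).neg)
    (fun t ht => by have := hu t ht; rw [neg_neg]; positivity)
  refine (h.mono hS).not_signs (Or.inl fun t ht => hu t (hS.trans ht)) ?_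
  simpa [or_comm] using hsign

lemma not_pos_right (h : ExpSystem u p v q T) (hv : ∀ t, T ≤ t → 0 < v t) : False := by
  obtain ⟨S, hS, hsign⟩ := eventually_sign_of_convex h.du h.dp
    (fun t ht => by
      have := hv t ht
      have : 0 < t := by linarith [h.one_le]
      positivity)
  exact (h.mono hS).not_signs hsign (Or.inl fun t ht => hv t (hS.trans ht))

lemma not_ne_zero_left (h : ExpSystem u p v q T) (hu : ∀ t, T ≤ t → u t ≠ 0) : False := by
  rcases sign_of_ne_zero (fun t ht => (h.du t ht).continuousAt) hu with hp | hn
  · exact h.not_pos_left hp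
  · exact h.neg.not_pos_left (fun t ht => by linarith [hn t ht])

lemma not_ne_zero_right (h : ExpSystem u p v q T) (hv : ∀ t, T ≤ t → v t ≠ 0) : False := by
  rcases sign_of_ne_zero (fun t ht => (h.dv t ht).continuousAt) hv with hp | hn
  · exact h.not_pos_right hp
  · exact h.neg.not_pos_right (fun t ht => by linarith [hn t ht])

end ExpSystem

lemma abs_sq_mul_sign (x : ℝ) : |x| ^ 2 * Real.sign x = x * |x| := by
  rcases lt_trichotomy x 0 with h | h | h
  · rw [Real.sign_of_neg h, abs_of_neg h]; ring
  · simp [h]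
  · rw [Real.sign_of_pos h, abs_of_pos h]; ring

lemma abs_cube_mul_sign (x : ℝ) : |x| ^ 3 * Real.sign x = x ^ 3 := by
  rcases lt_trichotomy x 0 with h | h | h
  · rw [Real.sign_of_neg h, abs_of_neg h]; ring
  · simp [h]
  · rw [Real.sign_of_pos h, abs_of_pos h]; ring

/-- Example, second case. Every proper solution of the system
`x₁'' = t²·e^{2t}·|x₂|²·sign x₂`, `x₂'' = −e^{−t}·|x₁|³·sign x₁` on `[0, ∞)` is oscillating. -/
theorem example_system_exponential_oscillates
    (x₁ x₂ : ℝ → ℝ) (t₀ : ℝ) (ht₀ : 0 ≤ t₀)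
    (hd₁ : ∀ t ∈ Ici t₀, DifferentiableAt ℝ x₁ t ∧ DifferentiableAt ℝ (deriv x₁) t)
    (hd₂ : ∀ t ∈ Ici t₀, DifferentiableAt ℝ x₂ t ∧ DifferentiableAt ℝ (deriv x₂) t)
    (heq₁ : ∀ t ∈ Ici t₀,
      deriv (deriv x₁) t = t ^ 2 * Real.exp (2 * t) * |x₂ t| ^ 2 * Real.sign (x₂ t))
    (heq₂ : ∀ t ∈ Ici t₀,
      deriv (deriv x₂) t = -(Real.exp (-t) * |x₁ t| ^ 3 * Real.sign (x₁ t)))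
    (hproper : ∀ t ∈ Ici t₀, ∃ τ, t ≤ τ ∧ 0 < |x₁ τ| + |x₂ τ|) :
    (∀ T : ℝ, ∃ t, T ≤ t ∧ x₁ t = 0) ∧ (∀ T : ℝ, ∃ t, T ≤ t ∧ x₂ t = 0) := by
  have hsys : ExpSystem x₁ (deriv x₁) x₂ (deriv x₂) (t₀ + 1) := by
    refine ⟨by linarith, fun t ht => ?_, fun t ht => ?_, fun t ht => ?_, fun t ht => ?_⟩ <;>
      have ht' : t ∈ Ici t₀ := mem_Ici.2 (by linarith)
    · exact (hd₁ t ht').1.hasDerivAt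
    · have := (hd₁ t ht').2.hasDerivAt
      rwa [heq₁ t ht', mul_assoc _ (|x₂ t| ^ 2), abs_sq_mul_sign] at this
    · exact (hd₂ t ht').1.hasDerivAt
    · have := (hd₂ t ht').2.hasDerivAt
      rwa [heq₂ t ht', mul_assoc _ (|x₁ t| ^ 3), abs_cube_mul_sign] at this
  constructor <;> intro T <;> by_contra! hne <;>
    have hS := hsys.mono (le_max_left (t₀ + 1) T)
  · exact hS.not_ne_zero_left fun t ht => hne t ((le_max_right _ _).trans ht)
  · exact hS.not_ne_zero_right fun t ht => hne t ((le_max_right _ _).trans ht)
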